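/- arXiv:2604.10952 — 2 statements merged into one kernel-verified Lean document; each statement's English description precedes it below -/
import Mathlib

section
/- The set function f is submodular on sets of cardinality at most k: for all subsets A, B of {1,…,m} with |A ∪ B| ≤ k, f(A ∪ B) + f(A ∩ B) ≤ f(A) + f(B). -/
open Finset

noncomputable section

/-- Frobenius inner product `⟨S, γ⟩ = Σ_{i,j} S_{ij} γ_{ij}`. -/
def dotS {m n : ℕ} (S γ : Fin m → Fin n → ℝ) : ℝ := ∑ i, ∑ j, S i j * γ i j

/-- Transport polytope with equality marginals. -/
def Gamma {m n : ℕ} (μ : Fin m → ℝ) (ν : Fin n → ℝ) : Set (Fin m → Fin n → ℝ) :=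
  {γ | (∀ i j, 0 ≤ γ i j) ∧ (∀ i, ∑ j, γ i j = μ i) ∧ (∀ j, ∑ i, γ i j = ν j)}

/-- Semi-relaxed transport polytope: target marginal constraint is `≤`. -/
def GammaLe {m n : ℕ} (μ : Fin m → ℝ) (ν : Fin n → ℝ) : Set (Fin m → Fin n → ℝ) :=
  {γ | (∀ i j, 0 ≤ γ i j) ∧ (∀ i, ∑ j, γ i j = μ i) ∧ (∀ j, ∑ i, γ i j ≤ ν j)}

/-- Indicator vector of a subset `P ⊆ {1,…,m}`. -/
def indVec {m : ℕ} (P : Finset (Fin m)) : Fin m → ℝ := fun i => if i ∈ P then 1 else 0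

/-- `h(P) = max_{γ ∈ Γ(1_P, (|P|/n)𝟙)} ⟨S, γ⟩`. -/
def hval {m n : ℕ} (S : Fin m → Fin n → ℝ) (P : Finset (Fin m)) : ℝ :=
  sSup (dotS S '' Gamma (indVec P) (fun _ => (P.card : ℝ) / (n : ℝ)))

/-- `f(P) = max_{γ ∈ Γ_≤(1_P, (k/n)𝟙)} ⟨S, γ⟩`. -/
def fval {m n : ℕ} (k : ℕ) (S : Fin m → Fin n → ℝ) (P : Finset (Fin m)) : ℝ :=
  sSup (dotS S '' GammaLe (indVec P) (fun _ => (k : ℝ) / (n : ℝ)))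

/-- The `c`-transform of the price vector `v`. -/
def phiS {m n : ℕ} (S : Fin m → Fin n → ℝ) (hn : 0 < n) (v : Fin n → ℝ) (i : Fin m) : ℝ :=
  (Finset.univ : Finset (Fin n)).sup' ⟨⟨0, hn⟩, Finset.mem_univ _⟩ (fun j => S i j - v j)

/-- The dual objective. -/
def dualS {m n : ℕ} (S : Fin m → Fin n → ℝ) (hn : 0 < n) (κ : ℝ) (P : Finset (Fin m))
    (v : Fin n → ℝ) : ℝ :=
  ∑ i, indVec P i * phiS S hn v i + ∑ j, κ * v j

lemma le_phiS {m n : ℕ} (S : Fin m → Fin n → ℝ) (hn : 0 < n) (v : Fin n → ℝ) (i : Fin m)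
    (j : Fin n) : S i j - v j ≤ phiS S hn v i :=
  Finset.le_sup' (fun j => S i j - v j) (Finset.mem_univ j)

lemma phiS_attained {m n : ℕ} (S : Fin m → Fin n → ℝ) (hn : 0 < n) (v : Fin n → ℝ)
    (i : Fin m) : ∃ j, phiS S hn v i = S i j - v j := by
  obtain ⟨j, -, hj⟩ := Finset.exists_mem_eq_sup' (s := (Finset.univ : Finset (Fin n)))
    ⟨⟨0, hn⟩, Finset.mem_univ _⟩ (fun j => S i j - v j)
  exact ⟨j, hj⟩

lemma indVec_nonneg {m : ℕ} (P : Finset (Fin m)) (i : Fin m) : 0 ≤ indVec P i := by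
  unfold indVec; split_ifs <;> norm_num

lemma weak_dual {m n : ℕ} (S : Fin m → Fin n → ℝ) (hn : 0 < n) (κ : ℝ) (P : Finset (Fin m))
    (v : Fin n → ℝ) (hv : ∀ j, 0 ≤ v j) (γ : Fin m → Fin n → ℝ)
    (hγ : γ ∈ GammaLe (indVec P) (fun _ => κ)) : dotS S γ ≤ dualS S hn κ P v := by
  obtain ⟨h0, h1, h2⟩ := hγ
  have e1 : dotS S γ ≤ ∑ i, ∑ j, (phiS S hn v i * γ i j + v j * γ i j) := by
    unfold dotS
    refine Finset.sum_le_sum fun i _ => Finset.sum_le_sum fun j _ => ?_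
    have := le_phiS S hn v i j
    have := h0 i j
    nlinarith
  have e2 : ∑ i, ∑ j, (phiS S hn v i * γ i j + v j * γ i j)
      = ∑ i, indVec P i * phiS S hn v i + ∑ j, v j * ∑ i, γ i j := by
    simp_rw [Finset.sum_add_distrib, ← Finset.mul_sum, h1]
    rw [Finset.sum_comm]
    simp_rw [← Finset.mul_sum, mul_comm]
  have e3 : ∑ j, v j * ∑ i, γ i j ≤ ∑ j, κ * v j := by
    refine Finset.sum_le_sum fun j _ => ?_
    have := h2 j
    have := hv j
    nlinarith
  unfold dualS
  linarith

lemma GammaLe_nonempty {m n : ℕ} (hn : 0 < n) (k : ℕ) (P : Finset (Fin m)) (hP : P.card ≤ k) :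
    (GammaLe (n := n) (indVec P) (fun _ => (k : ℝ) / (n : ℝ))).Nonempty := by
  have hn' : (0 : ℝ) < n := by exact_mod_cast hn
  refine ⟨fun i _ => indVec P i / n, ?_, ?_, ?_⟩
  · intro i j
    exact div_nonneg (indVec_nonneg P i) hn'.le
  · intro i
    simp
    field_simp
  · intro j
    have : ∑ i, indVec P i = (P.card : ℝ) := by simp [indVec]
    rw [← Finset.sum_div, this]
    exact div_le_div_of_nonneg_right (by exact_mod_cast hP) hn'.le

lemma bdd_dotS {m n : ℕ} (S : Fin m → Fin n → ℝ) (hn : 0 < n) (κ : ℝ) (P : Finset (Fin m)) :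
    BddAbove (dotS S '' GammaLe (indVec P) (fun _ => κ)) := by
  refine ⟨dualS S hn κ P 0, ?_⟩
  rintro _ ⟨γ, hγ, rfl⟩
  exact weak_dual S hn κ P 0 (fun _ => le_rfl) γ hγ

lemma fval_le_dual {m n : ℕ} (S : Fin m → Fin n → ℝ) (hn : 0 < n) (k : ℕ) (P : Finset (Fin m))
    (hP : P.card ≤ k) (v : Fin n → ℝ) (hv : ∀ j, 0 ≤ v j) :
    fval k S P ≤ dualS S hn ((k : ℝ) / n) P v := by
  refine csSup_le ((GammaLe_nonempty hn k P hP).image _) ?_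
  rintro _ ⟨γ, hγ, rfl⟩
  exact weak_dual S hn _ P v hv γ hγ

/-- Objective value and column marginal, as a linear map. -/
def margMap {m n : ℕ} (S : Fin m → Fin n → ℝ) :
    (Fin m → Fin n → ℝ) →ₗ[ℝ] (ℝ × (Fin n → ℝ)) where
  toFun γ := (dotS S γ, fun j => ∑ i, γ i j)
  map_add' x y := by
    ext
    · simp [dotS, mul_add, Finset.sum_add_distrib]
    · simp [Finset.sum_add_distrib]
  map_smul' c x := by
    ext
    · simp only [dotS, Pi.smul_apply, smul_eq_mul, RingHom.id_apply, Prod.smul_mk, Finset.mul_sum]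
      refine Finset.sum_congr rfl fun i _ => Finset.sum_congr rfl fun j _ => by ring
    · simp [Finset.mul_sum]

/-- Plans with prescribed row marginals. -/
def rowPlans {m n : ℕ} (P : Finset (Fin m)) : Set (Fin m → Fin n → ℝ) :=
  {γ | (∀ i j, 0 ≤ γ i j) ∧ (∀ i, ∑ j, γ i j = indVec P i)}

lemma rowPlans_convex {m n : ℕ} (P : Finset (Fin m)) : Convex ℝ (rowPlans (n := n) P) := by
  rintro x ⟨hx0, hx1⟩ y ⟨hy0, hy1⟩ a b ha hb hab
  refine ⟨fun i j => ?_, fun i => ?_⟩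
  · have := hx0 i j
    have := hy0 i j
    simp only [Pi.add_apply, Pi.smul_apply, smul_eq_mul]
    positivity
  · simp only [Pi.add_apply, Pi.smul_apply, smul_eq_mul, Finset.sum_add_distrib,
      ← Finset.mul_sum, hx1, hy1]
    rw [← add_mul, hab, one_mul]

lemma rowPlans_compact {m n : ℕ} (P : Finset (Fin m)) : IsCompact (rowPlans (n := n) P) := by
  refine IsCompact.of_isClosed_subset (isCompact_Icc (a := (0 : Fin m → Fin n → ℝ)) (b := 1))
    ?_ ?_
  · have : rowPlans (n := n) P = (⋂ i, ⋂ j, {γ | 0 ≤ γ i j}) ∩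
        ⋂ i, {γ | ∑ j, γ i j = indVec P i} := by
      ext γ; simp [rowPlans]
    rw [this]
    refine IsClosed.inter ?_ ?_
    · refine isClosed_iInter fun i => isClosed_iInter fun j => isClosed_le ?_ ?_ <;> fun_prop
    · refine isClosed_iInter fun i => isClosed_eq ?_ ?_ <;> fun_prop
  · rintro γ ⟨h0, h1⟩
    refine ⟨fun i j => h0 i j, fun i j => ?_⟩
    have a : γ i j ≤ ∑ j, γ i j :=
      Finset.single_le_sum (f := γ i) (fun j _ => h0 i j) (Finset.mem_univ j)
    have b : indVec P i ≤ 1 := by unfold indVec; split_ifs <;> norm_num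
    rw [h1 i] at a
    exact a.trans b

lemma nonneg_of_ray {C a u : ℝ} (h : ∀ s : ℝ, 0 ≤ s → u < C + s * a) : 0 ≤ a := by
  by_contra hneg
  push Not at hneg
  have h0 := h 0 le_rfl
  have h1 := h ((C - u) / (-a)) (div_nonneg (by linarith) (by linarith))
  have : (C - u) / (-a) * a = -(C - u) := by
    have : a ≠ 0 := hneg.ne
    field_simp
  linarith

lemma strong_dual {m n : ℕ} (S : Fin m → Fin n → ℝ) (hn : 0 < n) (k : ℕ) (P : Finset (Fin m))
    (hP : P.card ≤ k) (ε : ℝ) (hε : 0 < ε) :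
    ∃ v : Fin n → ℝ, (∀ j, 0 ≤ v j) ∧ dualS S hn ((k : ℝ) / n) P v ≤ fval k S P + ε := by
  set κ : ℝ := (k : ℝ) / n with hκ
  set F : ℝ := fval k S P with hF
  have hle : ∀ γ ∈ GammaLe (indVec P) (fun _ => κ), dotS S γ ≤ F := fun γ hγ =>
    le_csSup (bdd_dotS S hn κ P) ⟨γ, hγ, rfl⟩
  have hcomp : IsCompact (margMap S '' rowPlans P) :=
    (rowPlans_compact P).image (margMap S).continuous_of_finiteDimensional
  have hconv : Convex ℝ (margMap S '' rowPlans P) := (rowPlans_convex P).linear_image _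
  have hdisj : Disjoint (margMap S '' rowPlans P)
      (Set.Ici (F + ε) ×ˢ Set.Iic (fun _ : Fin n => κ)) := by
    rw [Set.disjoint_left]
    rintro _ ⟨γ, ⟨h0, h1⟩, rfl⟩ ⟨h2, h3⟩
    have h4 := hle γ ⟨h0, h1, fun j => h3 j⟩
    have h5 : F + ε ≤ dotS S γ := h2
    linarith
  obtain ⟨l, u, w, hl, huw, hw⟩ := geometric_hahn_banach_compact_closed hconv hcomp
    ((convex_Ici (F + ε)).prod (convex_Iic (fun _ : Fin n => κ)))
    (isClosed_Ici.prod isClosed_Iic) hdisj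
  set α : ℝ := l (1, 0) with hα
  set β : Fin n → ℝ := fun j => - l (0, Pi.single j 1) with hβ
  have hform : ∀ (t : ℝ) (c : Fin n → ℝ), l (t, c) = t * α - ∑ j, c j * β j := by
    intro t c
    have : ((t, c) : ℝ × (Fin n → ℝ)) = t • ((1 : ℝ), (0 : Fin n → ℝ))
        + ∑ j, c j • ((0 : ℝ), (Pi.single j 1 : Fin n → ℝ)) := by
      ext j
      · simp [Prod.fst_sum]
      · simp [Prod.snd_sum, Finset.sum_apply, Pi.single_apply]
    rw [this, map_add, map_smul, map_sum]
    simp only [map_smul, smul_eq_mul, hα, hβ, mul_neg, Finset.sum_neg_distrib, sub_neg_eq_add]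
  have hα0 : 0 ≤ α := by
    refine nonneg_of_ray (C := l (F + ε, fun _ => κ)) (u := w) fun s hs => ?_
    have := hw (F + ε + s, fun _ => κ) ⟨by simpa using hs, le_refl (fun _ : Fin n => κ)⟩
    rw [hform] at this ⊢
    linarith
  have hβ0 : ∀ j, 0 ≤ β j := by
    intro j
    refine nonneg_of_ray (C := l (F + ε, fun _ => κ)) (u := w) fun s hs => ?_
    have := hw (F + ε, (fun _ => κ) + (-s) • Pi.single j 1) ⟨by simp, by
      intro i
      by_cases h : i = j
      · subst h; simpa using hs
      · simp [h]⟩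
    rw [hform] at this ⊢
    simp only [Pi.add_apply, Pi.smul_apply, smul_eq_mul, add_mul, Finset.sum_add_distrib,
      mul_assoc, ← Finset.mul_sum] at this
    simp [Pi.single_apply, ← Finset.mul_sum] at this
    simp [← Finset.mul_sum]
    linarith
  have hwF := hw (F + ε, fun _ => κ) ⟨by simp, le_refl (fun _ : Fin n => κ)⟩
  rw [hform] at hwF
  have hkey : ∀ γ ∈ rowPlans P, dotS S γ * α - ∑ j, (∑ i, γ i j) * β j
      < (F + ε) * α - ∑ j, κ * β j := by
    intro γ hγ
    have h1 := hl _ ⟨γ, hγ, rfl⟩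
    have h2 : l (margMap S γ) = dotS S γ * α - ∑ j, (∑ i, γ i j) * β j := hform _ _
    linarith
  have hαpos : 0 < α := by
    obtain ⟨γ, hγ⟩ := GammaLe_nonempty (n := n) hn k P hP
    have h1 := hkey γ ⟨hγ.1, hγ.2.1⟩
    have h2 := hle γ hγ
    have h3 : ∑ j, (∑ i, γ i j) * β j ≤ ∑ j, κ * β j :=
      Finset.sum_le_sum fun j _ => mul_le_mul_of_nonneg_right (hγ.2.2 j) (hβ0 j)
    rcases hα0.eq_or_lt with h | h
    · rw [← h] at h1
      linarith
    · exact h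
  refine ⟨fun j => β j / α, fun j => div_nonneg (hβ0 j) hα0, ?_⟩
  choose J hJ using phiS_attained S hn (fun j => β j / α)
  set γ : Fin m → Fin n → ℝ := fun i j => if j = J i then indVec P i else 0 with hγdef
  have hγ : γ ∈ rowPlans P := by
    refine ⟨fun i j => ?_, fun i => ?_⟩
    · simp only [hγdef]
      split_ifs
      · exact indVec_nonneg P i
      · exact le_rfl
    · simp [hγdef]
  have h1 := hkey γ hγ
  have h2 : dotS S γ = ∑ i, indVec P i * S i (J i) := by
    simp [dotS, hγdef, mul_comm]
  have h3 : ∑ j, (∑ i, γ i j) * β j = ∑ i, indVec P i * β (J i) := by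
    simp_rw [Finset.sum_mul]
    rw [Finset.sum_comm]
    simp [hγdef]
  have h4 : dualS S hn κ P (fun j => β j / α) * α
      = (∑ i, indVec P i * S i (J i)) * α - ∑ i, indVec P i * β (J i) + ∑ j, κ * β j := by
    unfold dualS
    simp_rw [hJ]
    rw [add_mul, Finset.sum_mul, Finset.sum_mul, Finset.sum_mul, ← Finset.sum_sub_distrib]
    congr 1
    · refine Finset.sum_congr rfl fun i _ => ?_
      field_simp
    · refine Finset.sum_congr rfl fun i _ => ?_
      field_simp
  rw [h2, h3] at h1
  refine le_of_mul_le_mul_right ?_ hαpos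
  linarith

lemma dual_submod {m n : ℕ} (S : Fin m → Fin n → ℝ) (hn : 0 < n) (κ : ℝ)
    (A B : Finset (Fin m)) (p q : Fin n → ℝ) :
    dualS S hn κ (A ∪ B) (fun j => max (p j) (q j))
      + dualS S hn κ (A ∩ B) (fun j => min (p j) (q j)) ≤ dualS S hn κ A p + dualS S hn κ B q := by
  have hv : ∑ j, κ * max (p j) (q j) + ∑ j, κ * min (p j) (q j)
      = ∑ j, κ * p j + ∑ j, κ * q j := by
    rw [← Finset.sum_add_distrib, ← Finset.sum_add_distrib]
    refine Finset.sum_congr rfl fun j _ => ?_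
    rw [← mul_add, max_add_min, mul_add]
  have hi : ∑ i, indVec (A ∪ B) i * phiS S hn (fun j => max (p j) (q j)) i
      + ∑ i, indVec (A ∩ B) i * phiS S hn (fun j => min (p j) (q j)) i
      ≤ ∑ i, indVec A i * phiS S hn p i + ∑ i, indVec B i * phiS S hn q i := by
    rw [← Finset.sum_add_distrib, ← Finset.sum_add_distrib]
    refine Finset.sum_le_sum fun i _ => ?_
    obtain ⟨a, ha⟩ := phiS_attained S hn (fun j => max (p j) (q j)) i
    obtain ⟨b, hb⟩ := phiS_attained S hn (fun j => min (p j) (q j)) i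
    have h1 := le_phiS S hn p i a
    have h2 := le_phiS S hn q i a
    have h3 := le_phiS S hn p i b
    have h4 := le_phiS S hn q i b
    have h5 := le_max_left (p a) (q a)
    have h6 := le_max_right (p a) (q a)
    by_cases hA : i ∈ A <;> by_cases hB : i ∈ B <;> simp [indVec, hA, hB]
    · rcases min_choice (p b) (q b) with h | h <;> rw [h] at hb <;> linarith
    · linarith
    · linarith
  unfold dualS
  linarith

/-- `f` is submodular on sets of cardinality at most `k`. -/
theorem stmt_8 (m n k : ℕ) (hm : 0 < m) (hn : 0 < n) (hk : 0 < k)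
    (hkm : k ≤ m) (hkn : k ≤ n)
    (S : Fin m → Fin n → ℝ) (hS : ∀ i j, 0 ≤ S i j)
    (A B : Finset (Fin m)) (hcard : (A ∪ B).card ≤ k) :
    fval k S (A ∪ B) + fval k S (A ∩ B) ≤ fval k S A + fval k S B := by 
  have hcA : A.card ≤ k := (Finset.card_le_card Finset.subset_union_left).trans hcard
  have hcB : B.card ≤ k := (Finset.card_le_card Finset.subset_union_right).trans hcard
  have hcI : (A ∩ B).card ≤ k := (Finset.card_le_card Finset.inter_subset_left).trans hcA
  refine le_of_forall_pos_le_add fun ε hε => ?_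
  obtain ⟨p, hp0, hp⟩ := strong_dual S hn k A hcA (ε / 2) (by linarith)
  obtain ⟨q, hq0, hq⟩ := strong_dual S hn k B hcB (ε / 2) (by linarith)
  have h1 := fval_le_dual S hn k (A ∪ B) hcard (fun j => max (p j) (q j))
    (fun j => le_max_of_le_left (hp0 j))
  have h2 := fval_le_dual S hn k (A ∩ B) hcI (fun j => min (p j) (q j))
    (fun j => le_min (hp0 j) (hq0 j))
  have h3 := dual_submod S hn ((k : ℝ) / n) A B p q
  linarith
end
end

section
/- Approximation guarantee of greedy with approximate marginal gains: assume α_{j,max} > 0 for every j ∈ {1,…,m}, and set α = min_{j ∈ {1,…,m}} α_{j,min}/α_{j,max}. Let P₀ = ∅ and, for each i = 0, 1, …, k−1, let P_{i+1} = P_i ∪ {x_i*}, where γ_{P_i} ∈ Γ_≤(1_{P_i},(k/n)𝟙) is any coupling attaining f(P_i) and x_i* is any element of {1,…,m} \ P_i maximizing the approximate marginal gain f̂(x ∣ P_i) over x ∈ {1,…,m} \ P_i. Then the set P̂ = P_k satisfies |P̂| = k and f(P̂) = h(P̂) ≥ (1 − e^{−α}) · max{f(P) : P ⊆ {1,…,m},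 |P| ≤ k}. -/
open Finset

noncomputable section

/-- Sum of the `t` largest entries of `s`, as the maximum of `∑_{i ∈ T} s i`
over subsets `T` of cardinality `t`. -/
def topSum {n : ℕ} (t : ℕ) (s : Fin n → ℝ) : ℝ :=
  sSup {x : ℝ | ∃ T : Finset (Fin n), T.card = t ∧ x = ∑ i ∈ T, s i}

/-- Sum of the `t` smallest entries of `s`, as the minimum of `∑_{i ∈ T} s i`
over subsets `T` of cardinality `t`. -/
def botSum {n : ℕ} (t : ℕ) (s : Fin n → ℝ) : ℝ :=
  sInf {x : ℝ | ∃ T : Finset (Fin n), T.card = t ∧ x = ∑ i ∈ T, s i}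

/-- `α_{j,max} = (1/⌊n/k⌋)·(sum of the ⌊n/k⌋ largest entries of row j of S)`. -/
def alphaMax {m n : ℕ} (k : ℕ) (S : Fin m → Fin n → ℝ) (j : Fin m) : ℝ :=
  (1 / ((n / k : ℕ) : ℝ)) * topSum (n / k) (S j)

/-- `α_{j,min} = (1/⌊n/k⌋)·(sum of the ⌊n/k⌋ smallest entries of row j of S)`. -/
def alphaMin {m n : ℕ} (k : ℕ) (S : Fin m → Fin n → ℝ) (j : Fin m) : ℝ :=
  (1 / ((n / k : ℕ) : ℝ)) * botSum (n / k) (S j)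

/-- Approximate marginal gain
`f̂(x_j ∣ P) = max{⟨S(j,·), v⟩ : v ≥ 0, 𝟙ᵀv = 1, v ≤ (k/n)𝟙 − γ_Pᵀ𝟙}`. -/
def fhat {m n : ℕ} (k : ℕ) (S : Fin m → Fin n → ℝ)
    (γP : Fin m → Fin n → ℝ) (j : Fin m) : ℝ :=
  sSup {x : ℝ | ∃ v : Fin n → ℝ, (∀ i, 0 ≤ v i) ∧ (∑ i, v i = 1) ∧
    (∀ i, v i ≤ (k : ℝ) / (n : ℝ) - ∑ l, γP l i) ∧ x = ∑ i, S j i * v i}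


lemma aux_top {n : ℕ} (t : ℕ) (ht : 0 < t) (htn : t ≤ n) (s v : Fin n → ℝ)
    (hv0 : ∀ i, 0 ≤ v i) (hv1 : ∑ i, v i = 1) (hvt : ∀ i, v i ≤ 1 / (t : ℝ)) :
    ∃ T : Finset (Fin n), T.card = t ∧ ∑ i, s i * v i ≤ (1 / (t : ℝ)) * ∑ i ∈ T, s i := by
  classical
  have hne : (powersetCard t (univ : Finset (Fin n))).Nonempty := by
    apply powersetCard_nonempty.2; simpa using htn
  obtain ⟨T, hT, hmax⟩ := exists_max_image (powersetCard t (univ : Finset (Fin n)))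
    (fun T => ∑ i ∈ T, s i) hne
  have hTc : T.card = t := (mem_powersetCard.1 hT).2
  refine ⟨T, hTc, ?_⟩
  have hex : ∀ i ∈ T, ∀ j ∉ T, s j ≤ s i := by
    intro i hi j hj
    have hj' : j ∉ T.erase i := fun h => hj (mem_of_mem_erase h)
    have h := hmax (insert j (T.erase i)) (by
      rw [mem_powersetCard]
      refine ⟨subset_univ _, ?_⟩
      rw [card_insert_of_notMem hj', card_erase_of_mem hi]; omega)
    rw [sum_insert hj'] at h
    have h2 := add_sum_erase T s hi
    linarith
  have hTne : T.Nonempty := by rw [← card_pos]; omega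
  obtain ⟨i0, hi0, hmin⟩ := exists_min_image T s hTne
  have ht' : (0 : ℝ) < t := by exact_mod_cast ht
  have key : ∑ i, (s i - s i0) * v i ≤ ∑ i ∈ T, (s i - s i0) * (1 / (t : ℝ)) := by
    rw [← sum_add_sum_compl T]
    have h1 : ∑ i ∈ T, (s i - s i0) * v i ≤ ∑ i ∈ T, (s i - s i0) * (1 / (t : ℝ)) :=
      sum_le_sum fun i hi => mul_le_mul_of_nonneg_left (hvt i) (by linarith [hmin i hi])
    have h2 : ∑ i ∈ Tᶜ, (s i - s i0) * v i ≤ 0 :=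
      sum_nonpos fun i hi => mul_nonpos_of_nonpos_of_nonneg
        (by linarith [hex i0 hi0 i (mem_compl.1 hi)]) (hv0 i)
    linarith
  have e1 : ∑ i, (s i - s i0) * v i = ∑ i, s i * v i - s i0 := by
    simp only [sub_mul, sum_sub_distrib, ← mul_sum, hv1, mul_one]
  have e2 : ∑ i ∈ T, (s i - s i0) * (1 / (t : ℝ)) = (1 / (t : ℝ)) * ∑ i ∈ T, s i - s i0 := by
    rw [← sum_mul, sum_sub_distrib, sum_const, hTc, nsmul_eq_mul]
    field_simp
  linarith

lemma aux_finite {n : ℕ} (t : ℕ) (s : Fin n → ℝ) :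
    {x : ℝ | ∃ T : Finset (Fin n), T.card = t ∧ x = ∑ i ∈ T, s i}.Finite := by
  apply (Set.finite_range (fun T : Finset (Fin n) => ∑ i ∈ T, s i)).subset
  rintro x ⟨T, -, rfl⟩
  exact ⟨T, rfl⟩

lemma aux_cap (n k : ℕ) (hn : 0 < n) (hk : 0 < k) (hkn : k ≤ n) :
    (k : ℝ) / n ≤ 1 / ((n / k : ℕ) : ℝ) := by
  have ht : 0 < n / k := Nat.div_pos hkn hk
  have h : (n / k) * k ≤ n := Nat.div_mul_le_self n k
  have h' : ((n / k : ℕ) : ℝ) * k ≤ n := by exact_mod_cast h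
  have ht' : (0 : ℝ) < ((n / k : ℕ) : ℝ) := by exact_mod_cast ht
  have hn' : (0 : ℝ) < n := by exact_mod_cast hn
  rw [div_le_div_iff₀ hn' ht']
  linarith

lemma aux_le_max {m n : ℕ} (k : ℕ) (hn : 0 < n) (hk : 0 < k) (hkn : k ≤ n)
    (S : Fin m → Fin n → ℝ) (j : Fin m) (v : Fin n → ℝ)
    (hv0 : ∀ i, 0 ≤ v i) (hv1 : ∑ i, v i = 1) (hvt : ∀ i, v i ≤ (k : ℝ) / n) :
    ∑ i, S j i * v i ≤ alphaMax k S j := by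
  obtain ⟨T, hT, h⟩ := aux_top (n / k) (Nat.div_pos hkn hk) (Nat.div_le_self n k) (S j) v hv0 hv1
    (fun i => (hvt i).trans (aux_cap n k hn hk hkn))
  refine h.trans (mul_le_mul_of_nonneg_left ?_ (by positivity))
  exact le_csSup (aux_finite _ _).bddAbove ⟨T, hT, rfl⟩

lemma aux_min_le {m n : ℕ} (k : ℕ) (hn : 0 < n) (hk : 0 < k) (hkn : k ≤ n)
    (S : Fin m → Fin n → ℝ) (j : Fin m) (v : Fin n → ℝ)
    (hv0 : ∀ i, 0 ≤ v i) (hv1 : ∑ i, v i = 1) (hvt : ∀ i, v i ≤ (k : ℝ) / n) :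
    alphaMin k S j ≤ ∑ i, S j i * v i := by
  obtain ⟨T, hT, h⟩ := aux_top (n / k) (Nat.div_pos hkn hk) (Nat.div_le_self n k)
    (fun i => - S j i) v hv0 hv1
    (fun i => (hvt i).trans (aux_cap n k hn hk hkn))
  simp only [neg_mul, sum_neg_distrib, mul_neg] at h
  have h2 : alphaMin k S j ≤ (1 / ((n / k : ℕ) : ℝ)) * ∑ i ∈ T, S j i :=
    mul_le_mul_of_nonneg_left (csInf_le (aux_finite _ _).bddBelow ⟨T, hT, rfl⟩) (by positivity)
  linarith

lemma aux_bdd {m n : ℕ} (c : ℝ) (S : Fin m → Fin n → ℝ) (hS : ∀ i j, 0 ≤ S i j)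
    (P : Finset (Fin m)) :
    BddAbove (dotS S '' GammaLe (indVec P) (fun _ => c)) := by
  refine ⟨∑ i, ∑ j, S i j * c, ?_⟩
  rintro _ ⟨γ, ⟨h0, h1, h2⟩, rfl⟩
  refine sum_le_sum fun i _ => sum_le_sum fun j _ => mul_le_mul_of_nonneg_left ?_ (hS i j)
  exact (single_le_sum (f := fun i => γ i j) (fun i _ => h0 i j) (mem_univ i)).trans (h2 j)

lemma aux_nonempty {m n : ℕ} (k : ℕ) (hn : 0 < n) (P : Finset (Fin m)) (hP : P.card ≤ k) :
    (GammaLe (n := n) (indVec P) (fun _ => (k : ℝ) / n)).Nonempty := by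
  have hn' : (n : ℝ) ≠ 0 := by positivity
  refine ⟨fun i _ => indVec P i / n, ?_, ?_, ?_⟩
  · intro i j
    simp only [indVec]; split_ifs <;> positivity
  · intro i
    simp only [sum_const, card_univ, Fintype.card_fin, nsmul_eq_mul]
    field_simp
  · intro j
    simp only [← sum_div]
    have : ∑ i, indVec P i = P.card := by simp [indVec]
    rw [this]
    have : (P.card : ℝ) ≤ k := by exact_mod_cast hP
    gcongr

/-- total mass -/
lemma aux_mass {m n : ℕ} {c : Fin n → ℝ} {P : Finset (Fin m)} {γ : Fin m → Fin n → ℝ}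
    (hγ : γ ∈ GammaLe (indVec P) c) : ∑ j, ∑ i, γ i j = P.card := by
  rw [sum_comm]
  simp only [hγ.2.1]
  simp [indVec]

/-- a feasible row for a new element -/
lemma aux_row {m n : ℕ} (k : ℕ) (hn : 0 < n) {P : Finset (Fin m)} {γ : Fin m → Fin n → ℝ}
    (hP : P.card < k) (hγ : γ ∈ GammaLe (indVec P) (fun _ => (k : ℝ) / n)) :
    ∃ v : Fin n → ℝ, (∀ i, 0 ≤ v i) ∧ (∑ i, v i = 1) ∧
      (∀ i, v i ≤ (k : ℝ) / (n : ℝ) - ∑ l, γ l i) := by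
  have hn' : (n : ℝ) ≠ 0 := by positivity
  have hd : (1 : ℝ) ≤ k - P.card := by
    have : (P.card : ℝ) + 1 ≤ k := by exact_mod_cast hP
    linarith
  have hr : ∀ i, 0 ≤ (k : ℝ) / (n : ℝ) - ∑ l, γ l i := fun i => sub_nonneg.2 (hγ.2.2 i)
  refine ⟨fun i => ((k : ℝ) / (n : ℝ) - ∑ l, γ l i) / (k - P.card), ?_, ?_, ?_⟩
  · intro i
    exact div_nonneg (hr i) (by linarith)
  · rw [← sum_div, sum_sub_distrib, aux_mass hγ]
    simp only [sum_const, card_univ, Fintype.card_fin, nsmul_eq_mul]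
    rw [mul_div_cancel₀ _ hn']
    exact div_self (by linarith)
  · intro i
    exact div_le_self (hr i) hd

/-- adding a row -/
lemma aux_insert {m n : ℕ} (c : ℝ) (S : Fin m → Fin n → ℝ)
    {P : Finset (Fin m)} {γ : Fin m → Fin n → ℝ}
    (hγ : γ ∈ GammaLe (indVec P) (fun _ => c)) {x : Fin m} (hx : x ∉ P)
    {v : Fin n → ℝ} (hv0 : ∀ i, 0 ≤ v i) (hv1 : ∑ i, v i = 1)
    (hv : ∀ i, v i ≤ c - ∑ l, γ l i) :
    ∃ γ' ∈ GammaLe (indVec (insert x P)) (fun _ => c),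
      dotS S γ' = dotS S γ + ∑ i, S x i * v i := by
  classical
  obtain ⟨h0, h1, h2⟩ := hγ
  have hx0 : ∀ j, γ x j = 0 := by
    have h := h1 x
    simp only [indVec, hx, if_false] at h
    intro j
    exact (sum_eq_zero_iff_of_nonneg (fun j _ => h0 x j)).1 h j (mem_univ j)
  refine ⟨fun i j => γ i j + if i = x then v j else 0, ⟨?_, ?_, ?_⟩, ?_⟩
  · intro i j
    have := h0 i j
    have := hv0 j
    dsimp only
    split_ifs <;> linarith
  · intro i
    rw [sum_add_distrib, h1 i]
    by_cases hi : i = x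
    · subst hi; simp [indVec, hx, hv1]
    · simp [indVec, hi]
  · intro j
    rw [sum_add_distrib]
    simp only [sum_ite_eq', mem_univ, if_true]
    linarith [hv j]
  · simp only [dotS, mul_add, sum_add_distrib]
    congr 1
    rw [sum_eq_single x]
    · simp
    · intro b _ hb; simp [hb]
    · simp

lemma aux_mono_insert {m n : ℕ} (k : ℕ) (hn : 0 < n) (S : Fin m → Fin n → ℝ)
    (hS : ∀ i j, 0 ≤ S i j) (P : Finset (Fin m)) (hP : P.card < k) (x : Fin m) (hx : x ∉ P) :
    fval k S P ≤ fval k S (insert x P) := by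
  refine csSup_le ((aux_nonempty k hn P hP.le).image _) ?_
  rintro _ ⟨γ, hγ, rfl⟩
  obtain ⟨v, hv0, hv1, hv⟩ := aux_row k hn hP hγ
  obtain ⟨γ', hγ', he⟩ := aux_insert _ S hγ hx hv0 hv1 hv
  have h1 : dotS S γ' ≤ fval k S (insert x P) := le_csSup (aux_bdd _ S hS _) ⟨γ', hγ', rfl⟩
  have h2 : 0 ≤ ∑ i, S x i * v i := sum_nonneg fun i _ => mul_nonneg (hS x i) (hv0 i)
  linarith

lemma aux_mono {m n : ℕ} (k : ℕ) (hn : 0 < n) (S : Fin m → Fin n → ℝ)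
    (hS : ∀ i j, 0 ≤ S i j) (Q P : Finset (Fin m)) (hQ : Q ⊆ P) (hP : P.card ≤ k) :
    fval k S Q ≤ fval k S P := by
  classical
  suffices H : ∀ R : Finset (Fin m), (Q ∪ R).card ≤ k → fval k S Q ≤ fval k S (Q ∪ R) by
    have := H P
    rw [union_eq_right.2 hQ] at this
    exact this hP
  intro R
  induction R using Finset.induction_on with
  | empty => intro _; simp
  | insert x R hxR ih =>
    intro hc
    rw [union_insert] at hc ⊢
    by_cases hx : x ∈ Q ∪ R
    · rw [insert_eq_of_mem hx] at hc ⊢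
      exact ih hc
    · rw [card_insert_of_notMem hx] at hc
      exact (ih (by omega)).trans (aux_mono_insert k hn S hS _ (by omega) x hx)

/-- dropping rows -/
lemma aux_drop {m n : ℕ} (k : ℕ) (hn : 0 < n) (hk : 0 < k) (hkn : k ≤ n)
    (S : Fin m → Fin n → ℝ)
    (hS : ∀ i j, 0 ≤ S i j) (O P : Finset (Fin m)) (hO : O.card ≤ k) :
    fval k S O ≤ fval k S (O ∩ P) + ∑ j ∈ O \ P, alphaMax k S j := by
  classical
  refine csSup_le ((aux_nonempty k hn O hO).image _) ?_
  rintro _ ⟨γ, ⟨h0, h1, h2⟩, rfl⟩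
  have hle : ∀ i j, γ i j ≤ (k : ℝ) / n := fun i j =>
    (single_le_sum (f := fun i => γ i j) (fun i _ => h0 i j) (mem_univ i)).trans (h2 j)
  have hmem : (fun i j => if i ∈ P then γ i j else 0) ∈
      GammaLe (indVec (O ∩ P)) (fun _ => (k : ℝ) / n) := by
    refine ⟨?_, ?_, ?_⟩
    · intro i j
      have := h0 i j
      dsimp only
      split_ifs <;> linarith
    · intro i
      by_cases hi : i ∈ P
      · simp [hi, h1 i, indVec]
      · simp [hi, indVec]
    · intro j
      refine le_trans (sum_le_sum fun i _ => ?_) (h2 j)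
      have := h0 i j
      dsimp only
      split_ifs <;> linarith
  have hb : dotS S (fun i j => if i ∈ P then γ i j else 0) ≤ fval k S (O ∩ P) :=
    le_csSup (aux_bdd _ S hS _) ⟨_, hmem, rfl⟩
  have hsplit : dotS S γ = dotS S (fun i j => if i ∈ P then γ i j else 0)
      + ∑ i ∈ O \ P, ∑ j, S i j * γ i j := by
    have : ∑ i ∈ O \ P, ∑ j, S i j * γ i j
        = ∑ i, if i ∈ O \ P then ∑ j, S i j * γ i j else 0 := by
      rw [sum_ite_mem, univ_inter]
    rw [this]
    simp only [dotS]
    rw [← sum_add_distrib]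
    refine sum_congr rfl fun i _ => ?_
    by_cases hi : i ∈ P
    · simp [hi]
    · by_cases hiO : i ∈ O
      · simp [hi, hiO]
      · have h := h1 i
        simp only [indVec, hiO, if_false] at h
        have hz : ∀ j, γ i j = 0 := fun j =>
          (sum_eq_zero_iff_of_nonneg (fun j _ => h0 i j)).1 h j (mem_univ j)
        simp [hi, hiO, hz]
  have hrow : ∑ i ∈ O \ P, ∑ j, S i j * γ i j ≤ ∑ j ∈ O \ P, alphaMax k S j := by
    refine sum_le_sum fun i hi => ?_
    refine aux_le_max k hn hk hkn S i (γ i) (h0 i) ?_ (hle i)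
    rw [h1 i]; simp [indVec, (mem_sdiff.1 hi).1]
  linarith

lemma aux_f_eq_h {m n : ℕ} (k : ℕ) (hn : 0 < n) (S : Fin m → Fin n → ℝ)
    (P : Finset (Fin m)) (hP : P.card = k) : fval k S P = hval S P := by
  have hn' : (n : ℝ) ≠ 0 := by positivity
  unfold fval hval
  rw [hP]
  congr 2
  ext γ
  constructor
  · intro hγ
    refine ⟨hγ.1, hγ.2.1, ?_⟩
    have hm := aux_mass hγ
    have hsum : ∑ j, ∑ i, γ i j = ∑ _j : Fin n, (k : ℝ) / n := by
      rw [hm, hP]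
      simp only [sum_const, card_univ, Fintype.card_fin, nsmul_eq_mul]
      rw [mul_div_cancel₀ _ hn']
    intro j
    exact (sum_eq_sum_iff_of_le (fun j _ => hγ.2.2 j)).1 hsum j (mem_univ j)
  · rintro ⟨h0, h1, h2⟩
    exact ⟨h0, h1, fun j => (h2 j).le⟩

/-- the approximate gain is a lower bound for the true gain -/
lemma aux_gain {m n : ℕ} (k : ℕ) (hn : 0 < n) (S : Fin m → Fin n → ℝ)
    (hS : ∀ i j, 0 ≤ S i j) (P : Finset (Fin m)) (hP : P.card < k) (γ : Fin m → Fin n → ℝ)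
    (hγ : γ ∈ GammaLe (indVec P) (fun _ => (k : ℝ) / n)) (hopt : dotS S γ = fval k S P)
    (x : Fin m) (hx : x ∉ P) :
    fhat k S γ x ≤ fval k S (insert x P) - fval k S P := by
  obtain ⟨v, hv0, hv1, hv⟩ := aux_row k hn hP hγ
  refine csSup_le ⟨_, v, hv0, hv1, hv, rfl⟩ ?_
  rintro _ ⟨v, hv0, hv1, hv, rfl⟩
  obtain ⟨γ', hγ', he⟩ := aux_insert _ S hγ hx hv0 hv1 hv
  have h1 : dotS S γ' ≤ fval k S (insert x P) := le_csSup (aux_bdd _ S hS _) ⟨γ', hγ', rfl⟩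
  linarith

lemma aux_fhat_min {m n : ℕ} (k : ℕ) (hn : 0 < n) (hk : 0 < k) (hkn : k ≤ n)
    (S : Fin m → Fin n → ℝ)
    (P : Finset (Fin m)) (hP : P.card < k) (γ : Fin m → Fin n → ℝ)
    (hγ : γ ∈ GammaLe (indVec P) (fun _ => (k : ℝ) / n)) (x : Fin m) :
    alphaMin k S x ≤ fhat k S γ x := by
  have hc : ∀ i, (k : ℝ) / n - ∑ l, γ l i ≤ (k : ℝ) / n := fun i =>
    sub_le_self _ (sum_nonneg fun l _ => hγ.1 l i)
  obtain ⟨v, hv0, hv1, hv⟩ := aux_row k hn hP hγ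
  refine (aux_min_le k hn hk hkn S x v hv0 hv1 fun i => (hv i).trans (hc i)).trans ?_
  refine le_csSup ⟨alphaMax k S x, ?_⟩ ⟨v, hv0, hv1, hv, rfl⟩
  rintro _ ⟨v, hv0, hv1, hv, rfl⟩
  exact aux_le_max k hn hk hkn S x v hv0 hv1 fun i => (hv i).trans (hc i)

/-- approximation guarantee of greedy with approximate marginal
gains: with `α = min_j α_{j,min}/α_{j,max}`, the greedy set `P̂ = P_k` built by
iteratively adding a maximizer of the approximate marginal gain satisfies
`|P̂| = k` and `f(P̂) = h(P̂) ≥ (1 − e^{−α})·max{f(P) : |P| ≤ k}`. -/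
theorem stmt_19 (m n k : ℕ) (hm : 0 < m) (hn : 0 < n) (hk : 0 < k)
    (hkm : k ≤ m) (hkn : k ≤ n)
    (S : Fin m → Fin n → ℝ) (hS : ∀ i j, 0 ≤ S i j)
    (hαpos : ∀ j : Fin m, 0 < alphaMax k S j)
    (α : ℝ)
    (hα : IsLeast {x : ℝ | ∃ j : Fin m, x = alphaMin k S j / alphaMax k S j} α)
    (Pseq : ℕ → Finset (Fin m)) (γseq : ℕ → (Fin m → Fin n → ℝ))
    (xseq : ℕ → Fin m)
    (hP0 : Pseq 0 = ∅)
    (hγopt : ∀ i < k,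
      γseq i ∈ GammaLe (indVec (Pseq i)) (fun _ => (k : ℝ) / (n : ℝ)) ∧
      dotS S (γseq i) = fval k S (Pseq i))
    (hxnotmem : ∀ i < k, xseq i ∉ Pseq i)
    (hxmax : ∀ i < k, ∀ x : Fin m, x ∉ Pseq i →
      fhat k S (γseq i) x ≤ fhat k S (γseq i) (xseq i))
    (hstep : ∀ i < k, Pseq (i + 1) = insert (xseq i) (Pseq i)) :
    (Pseq k).card = k ∧
    fval k S (Pseq k) = hval S (Pseq k) ∧
    (1 - Real.exp (-α)) *
        sSup {x : ℝ | ∃ P : Finset (Fin m), P.card ≤ k ∧ x = fval k S P} ≤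
      fval k S (Pseq k) := by
  classical
  have hk' : (0 : ℝ) < k := by exact_mod_cast hk
  have hcard : ∀ i ≤ k, (Pseq i).card = i := by
    intro i
    induction i with
    | zero => intro _; simp [hP0]
    | succ i ih =>
      intro hi
      rw [hstep i (by omega), card_insert_of_notMem (hxnotmem i (by omega)), ih (by omega)]
  have hPk := hcard k le_rfl
  refine ⟨hPk, aux_f_eq_h k hn S _ hPk, ?_⟩
  -- the optimum is attained
  have hfin : {x : ℝ | ∃ P : Finset (Fin m), P.card ≤ k ∧ x = fval k S P}.Finite := by
    apply (Set.finite_range (fun P : Finset (Fin m) => fval k S P)).subset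
    rintro x ⟨T, -, rfl⟩
    exact ⟨T, rfl⟩
  have hne : {x : ℝ | ∃ P : Finset (Fin m), P.card ≤ k ∧ x = fval k S P}.Nonempty :=
    ⟨_, ∅, by simp, rfl⟩
  obtain ⟨O, hO, hOeq⟩ := hne.csSup_mem hfin
  rw [hOeq]
  have hαj : ∀ j, α * alphaMax k S j ≤ alphaMin k S j := by
    intro j
    have := hα.2 ⟨j, rfl⟩
    rwa [le_div_iff₀ (hαpos j)] at this
  have hunif : ∀ j, alphaMin k S j ≤ alphaMax k S j ∧ 0 ≤ alphaMin k S j := by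
    intro j
    obtain ⟨γ, hγ⟩ := aux_nonempty (m := m) k hn ∅ (by simp)
    obtain ⟨v, hv0, hv1, hv⟩ := aux_row k hn (by simpa using hk) hγ
    have hv' : ∀ i, v i ≤ (k : ℝ) / n := fun i =>
      (hv i).trans (sub_le_self _ (sum_nonneg fun l _ => hγ.1 l i))
    refine ⟨(aux_min_le k hn hk hkn S j v hv0 hv1 hv').trans
      (aux_le_max k hn hk hkn S j v hv0 hv1 hv'), ?_⟩
    refine mul_nonneg (by positivity) (Real.sInf_nonneg ?_)
    rintro _ ⟨T, -, rfl⟩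
    exact sum_nonneg fun i _ => hS j i
  have hα01 : 0 ≤ α ∧ α ≤ 1 := by
    obtain ⟨j, hj⟩ := hα.1
    rw [hj]
    exact ⟨div_nonneg (hunif j).2 (hαpos j).le, (div_le_one (hαpos j)).2 (hunif j).1⟩
  -- one greedy step
  have hone : ∀ i < k, α * (fval k S O - fval k S (Pseq i)) ≤
      k * (fval k S (Pseq (i + 1)) - fval k S (Pseq i)) := by
    intro i hi
    obtain ⟨hγ, hopt⟩ := hγopt i hi
    have hc : (Pseq i).card < k := by rw [hcard i hi.le]; exact hi
    have hg := aux_gain k hn S hS (Pseq i) hc _ hγ hopt (xseq i) (hxnotmem i hi)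
    rw [← hstep i hi] at hg
    have hd := aux_drop k hn hk hkn S hS O (Pseq i) hO
    have hmo := aux_mono k hn S hS (O ∩ Pseq i) (Pseq i) inter_subset_right hc.le
    have hf0 : 0 ≤ fhat k S (γseq i) (xseq i) :=
      (hunif _).2.trans (aux_fhat_min k hn hk hkn S (Pseq i) hc _ hγ _)
    have hsum : ∑ j ∈ O \ Pseq i, α * alphaMax k S j ≤ k * fhat k S (γseq i) (xseq i) := by
      calc ∑ j ∈ O \ Pseq i, α * alphaMax k S j
          ≤ ∑ j ∈ O \ Pseq i, fhat k S (γseq i) (xseq i) := by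
            refine sum_le_sum fun j hj => (hαj j).trans ?_
            exact (aux_fhat_min k hn hk hkn S (Pseq i) hc _ hγ j).trans
              (hxmax i hi j (mem_sdiff.1 hj).2)
        _ = ((O \ Pseq i).card : ℝ) * fhat k S (γseq i) (xseq i) := by
            rw [sum_const, nsmul_eq_mul]
        _ ≤ k * fhat k S (γseq i) (xseq i) := by
            refine mul_le_mul_of_nonneg_right ?_ hf0
            exact_mod_cast (card_le_card sdiff_subset).trans hO
    rw [← mul_sum] at hsum
    calc α * (fval k S O - fval k S (Pseq i)) ≤ α * ∑ j ∈ O \ Pseq i, alphaMax k S j :=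
          mul_le_mul_of_nonneg_left (by linarith) hα01.1
      _ ≤ _ := hsum
      _ ≤ _ := mul_le_mul_of_nonneg_left hg hk'.le
  have hq0 : 0 ≤ 1 - α / k := by
    have : α / k ≤ 1 := by
      rw [div_le_one hk']
      have : (1 : ℝ) ≤ k := by exact_mod_cast hk
      linarith [hα01.2]
    linarith
  have hempty : 0 ≤ fval k S (Pseq 0) := by
    apply Real.sSup_nonneg
    rintro _ ⟨γ, hγ, rfl⟩
    exact sum_nonneg fun i _ => sum_nonneg fun j _ => mul_nonneg (hS i j) (hγ.1 i j)
  have hO0 : 0 ≤ fval k S O := by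
    apply Real.sSup_nonneg
    rintro _ ⟨γ, hγ, rfl⟩
    exact sum_nonneg fun i _ => sum_nonneg fun j _ => mul_nonneg (hS i j) (hγ.1 i j)
  have hind : ∀ i ≤ k, fval k S O - fval k S (Pseq i) ≤ (1 - α / k) ^ i * fval k S O := by
    intro i
    induction i with
    | zero => intro _; simpa using hempty
    | succ i ih =>
      intro hi
      have h1 := hone i (by omega)
      have h2 := mul_le_mul_of_nonneg_left (ih (by omega)) hq0
      have h3 : α / k * (fval k S O - fval k S (Pseq i)) ≤
          fval k S (Pseq (i + 1)) - fval k S (Pseq i) := by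
        rw [div_mul_eq_mul_div, div_le_iff₀ hk']
        linarith
      rw [pow_succ]
      nlinarith
  have hexp : (1 - α / k) ^ k ≤ Real.exp (-α) := by
    have h1 : 1 - α / k ≤ Real.exp (-(α / k)) := by
      have := Real.add_one_le_exp (-(α / k)); linarith
    calc (1 - α / k) ^ k ≤ Real.exp (-(α / k)) ^ k := pow_le_pow_left₀ hq0 h1 k
      _ = Real.exp (-α) := by
        rw [← Real.exp_nat_mul]
        congr 1
        field_simp
  have h1 := hind k le_rfl
  have h2 := mul_le_mul_of_nonneg_right hexp hO0
  linarith
end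
end
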